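/- arXiv:1901.01178 — 3 statements merged into one kernel-verified Lean document; each statement's English description precedes it below -/
import Mathlib

section
/- (Diagonal lemma, distributional form.) Let k ≥ 1, let T₁,…,T_k be finite sets, let T = T₁×⋯×T_k, and fix i ∈ {1,…,k}. For each x ∈ {0,1}^k let P_x be a probability distribution on T, and suppose there exist nonnegative functions q : {0,1}×Tᵢ → ℝ and p : {0,1}^{k−1}×T → ℝ such that for every x ∈ {0,1}^k and every τ = (τ₁,…,τ_k) ∈ T, P_x(τ) = q(xᵢ, τᵢ)·p(x_{−i}, τ), where x_{−i} denotes x with coordinate i removed. Then for all x, y ∈ {0,1}^k: h²(P_x, P_y) ≥ (1/2)·[ h²(P_x, P_{y[i←xᵢ]}) + h²(P_{x[i←yᵢ]}, P_y) ], where z[i←b] denotes the vector obtained from z by replacing its i-th coordinate by the bit b. -/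
noncomputable section

/-- Hellinger distance between two distributions on a finite set:
`h(P,Q) = (1/√2)·(∑ ω, (√(P ω) − √(Q ω))²)^{1/2}`. -/
def hellinger {Ω : Type*} [Fintype Ω] (P Q : Ω → ℝ) : ℝ :=
  (1 / Real.sqrt 2) * Real.sqrt (∑ ω, (Real.sqrt (P ω) - Real.sqrt (Q ω)) ^ 2)

/-!
The proof is AM-GM. Write `x' = x[i←yᵢ]` and `y' = y[i←xᵢ]`. A family which factorizes at `i`
satisfies the cut-and-paste identity `P x * P y = P x' * P y'`, so at every outcome `√(P x * P y)`
is the geometric mean of `√(P x * P y')` and `√(P x' * P y)`. Hence the Bhattacharyya coefficient of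
`P x` and `P y` is at most the average of those of the other two pairs. As the total masses agree,
the squared Hellinger distances satisfy the reverse inequality.
-/

/-- The Bhattacharyya coefficient (Hellinger affinity) `∑ ω, √(P ω) * √(Q ω)`, which is
`1 - h²(P, Q)` for probability distributions. -/
def bhattacharyya {Ω : Type*} [Fintype Ω] (P Q : Ω → ℝ) : ℝ :=
  ∑ ω, Real.sqrt (P ω) * Real.sqrt (Q ω)

section FiniteMeasures

variable {Ω : Type*} [Fintype Ω] {P Q P' Q' : Ω → ℝ}

theorem hellinger_sq (P Q : Ω → ℝ) :
    hellinger P Q ^ 2 = (∑ ω, (Real.sqrt (P ω) - Real.sqrt (Q ω)) ^ 2) / 2 := by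
  rw [hellinger, mul_pow, div_pow, Real.sq_sqrt zero_le_two,
    Real.sq_sqrt (Finset.sum_nonneg fun ω _ => sq_nonneg _)]
  ring

theorem hellinger_sq_eq_sub_bhattacharyya (hP : 0 ≤ P) (hQ : 0 ≤ Q) :
    hellinger P Q ^ 2 = (∑ ω, P ω + ∑ ω, Q ω) / 2 - bhattacharyya P Q := by
  have expand (ω : Ω) : (Real.sqrt (P ω) - Real.sqrt (Q ω)) ^ 2 =
      P ω + Q ω - 2 * (Real.sqrt (P ω) * Real.sqrt (Q ω)) := by
    rw [sub_sq, Real.sq_sqrt (hP ω), Real.sq_sqrt (hQ ω)]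
    ring
  simp only [hellinger_sq, expand, Finset.sum_sub_distrib, Finset.sum_add_distrib,
    ← Finset.mul_sum, bhattacharyya]
  ring

theorem two_mul_bhattacharyya_le_add (hP : 0 ≤ P) (hP' : 0 ≤ P') (h : P * Q = P' * Q') :
    2 * bhattacharyya P Q ≤ bhattacharyya P Q' + bhattacharyya P' Q := by
  simp only [bhattacharyya, Finset.mul_sum, ← Finset.sum_add_distrib]
  refine Finset.sum_le_sum fun ω _ => two_mul_le_add_of_sq_le_mul (by positivity) (by positivity) ?_
  have hω : Real.sqrt (P ω) * Real.sqrt (Q ω) = Real.sqrt (P' ω) * Real.sqrt (Q' ω) := by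
    rw [← Real.sqrt_mul (hP ω), ← Real.sqrt_mul (hP' ω)]
    exact congrArg Real.sqrt (congrFun h ω)
  linear_combination Real.sqrt (P ω) * Real.sqrt (Q ω) * hω

theorem hellinger_sq_add_le_two_mul (hP : 0 ≤ P) (hQ : 0 ≤ Q) (hP' : 0 ≤ P') (hQ' : 0 ≤ Q')
    (h : P * Q = P' * Q') (hmass : ∑ ω, P' ω + ∑ ω, Q' ω ≤ ∑ ω, P ω + ∑ ω, Q ω) :
    hellinger P Q' ^ 2 + hellinger P' Q ^ 2 ≤ 2 * hellinger P Q ^ 2 := by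
  have affinity_le := two_mul_bhattacharyya_le_add hP hP' h
  rw [hellinger_sq_eq_sub_bhattacharyya hP hQ, hellinger_sq_eq_sub_bhattacharyya hP hQ',
    hellinger_sq_eq_sub_bhattacharyya hP' hQ]
  linarith

end FiniteMeasures

section Rectangular

variable {ι : Type*} {α : ι → Type*} {M : Type*} {i : ι}

/-- Rectangularity at coordinate `i`: `P x` is a product of a factor depending on `x i` alone and a
factor depending on the other coordinates alone. A family of distributions on `Ω` is the case
`M = Ω → ℝ` with pointwise multiplication; both factors may then depend on the whole outcome. -/
def IsRectangularAt [Mul M] (P : (∀ j, α j) → M) (i : ι) : Prop :=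
  ∃ (q : α i → M) (p : (∀ j : {j // j ≠ i}, α j) → M), ∀ x, P x = q (x i) * p fun j => x j

theorem IsRectangularAt.mul_eq_update_mul_update [DecidableEq ι] [CommSemigroup M]
    {P : (∀ j, α j) → M} (hP : IsRectangularAt P i) (x y : ∀ j, α j) :
    P x * P y = P (Function.update x i (y i)) * P (Function.update y i (x i)) := by
  obtain ⟨q, p, hqp⟩ := hP
  have apply_update (z : ∀ j, α j) (b : α i) :
      P (Function.update z i b) = q b * p fun j => z j := by
    rw [hqp, Function.update_self]
    congr 2
    exact funext fun j => Function.update_of_ne j.2 b z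
  rw [apply_update, apply_update, hqp x, hqp y, mul_mul_mul_comm, mul_comm (q (x i)),
    mul_mul_mul_comm]

theorem diagonal_lemma_general [DecidableEq ι] {Ω : Type*} [Fintype Ω]
    {P : (∀ j, α j) → Ω → ℝ} (hP0 : ∀ x, 0 ≤ P x)
    (hmass : ∀ x y, ∑ ω, P x ω = ∑ ω, P y ω) (hP : IsRectangularAt P i) (x y : ∀ j, α j) :
    (1 / 2) * (hellinger (P x) (P (Function.update y i (x i))) ^ 2 +
        hellinger (P (Function.update x i (y i))) (P y) ^ 2) ≤
      hellinger (P x) (P y) ^ 2 := by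
  have := hellinger_sq_add_le_two_mul (hP0 x) (hP0 y) (hP0 _) (hP0 _)
    (hP.mul_eq_update_mul_update x y) (add_le_add (hmass _ x).le (hmass _ y).le)
  linarith

end Rectangular

/-- Diagonal lemma, distributional form.  If the family of distributions
`P x` on `T = T₁ × ⋯ × T_k` factorizes as `P x τ = q (x i) (τ i) · p (x₋ᵢ) τ`
(rectangularity at coordinate `i`), then for all inputs `x y`,
`h²(P x, P y) ≥ (1/2)·(h²(P x, P y[i←xᵢ]) + h²(P x[i←yᵢ], P y))`. -/
theorem diagonal_lemma {k : ℕ} (hk : 1 ≤ k)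
    (T : Fin k → Type*) [∀ j, Fintype (T j)] (i : Fin k)
    (P : (Fin k → Bool) → (∀ j, T j) → ℝ)
    (hP0 : ∀ x τ, 0 ≤ P x τ) (hP1 : ∀ x, ∑ τ, P x τ = 1)
    (q : Bool → T i → ℝ) (hq : ∀ b t, 0 ≤ q b t)
    (p : ({j : Fin k // j ≠ i} → Bool) → (∀ j, T j) → ℝ)
    (hp : ∀ y τ, 0 ≤ p y τ)
    (hfact : ∀ (x : Fin k → Bool) (τ : ∀ j, T j),
      P x τ = q (x i) (τ i) * p (fun j => x j.1) τ) :
    ∀ x y : Fin k → Bool,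
      (hellinger (P x) (P y)) ^ 2 ≥
        (1 / 2) * ((hellinger (P x) (P (Function.update y i (x i)))) ^ 2 +
          (hellinger (P (Function.update x i (y i))) (P y)) ^ 2) := by
  have hrect : IsRectangularAt P i :=
    ⟨fun b τ => q b (τ i), p, fun x => funext (hfact x)⟩
  exact diagonal_lemma_general hP0 (fun x y => (hP1 x).trans (hP1 y).symm) hrect
end
end

section
/- (Localization lemma, distributional form.) Let k ≥ 1, let T₁,…,T_k be finite sets, let T = T₁×⋯×T_k, and fix i ∈ {1,…,k}. Let P and Q be probability distributions on T such that there exist nonnegative functions a, b : Tᵢ → ℝ and c : T → ℝ with P(τ) = a(τᵢ)·c(τ) and Q(τ) = b(τᵢ)·c(τ) for all τ ∈ T. Let P⁽ⁱ⁾ and Q⁽ⁱ⁾ denote the marginal distributions of P and Q on the coordinate Tᵢ. Then h(P⁽ⁱ⁾, Q⁽ⁱ⁾) = h(P, Q). -/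
noncomputable section

/-!
With respect to the mass function `c`, `P` and `Q` have densities that depend only on the `i`-th
coordinate. Their marginals have the same densities `a` and `b` with respect to the marginal of
`c`, and the Hellinger distance depends only on the integral of `(√a - √b) ^ 2`, which is
unchanged by the projection.
-/

section Pushforward

variable {Ω S : Type*} [Fintype Ω] [DecidableEq S]

/-- The pushforward along `f` of a mass function on a finite type, given by summing over fibres.
Along the coordinate projection `τ ↦ τ i` it is the marginal at `i`. -/
def pushforward (f : Ω → S) (P : Ω → ℝ) (s : S) : ℝ :=
  ∑ ω with f ω = s, P ω

lemma pushforward_nonneg {P : Ω → ℝ} (hP : ∀ ω, 0 ≤ P ω) (f : Ω → S) (s : S) :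
    0 ≤ pushforward f P s :=
  Finset.sum_nonneg fun ω _ => hP ω

lemma pushforward_comp_mul (f : Ω → S) (g : S → ℝ) (P : Ω → ℝ) (s : S) :
    pushforward f (fun ω => g (f ω) * P ω) s = g s * pushforward f P s := by
  simp only [pushforward, Finset.mul_sum]
  refine Finset.sum_congr rfl fun ω hω => ?_
  rw [(Finset.mem_filter.mp hω).2]

lemma sum_pushforward [Fintype S] (f : Ω → S) (P : Ω → ℝ) :
    ∑ s, pushforward f P s = ∑ ω, P ω :=
  Finset.sum_fiberwise Finset.univ f P

end Pushforward

lemma hellinger_mul_right {Ω : Type*} [Fintype Ω] {a b c : Ω → ℝ}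
    (ha : ∀ ω, 0 ≤ a ω) (hb : ∀ ω, 0 ≤ b ω) (hc : ∀ ω, 0 ≤ c ω) :
    hellinger (fun ω => a ω * c ω) (fun ω => b ω * c ω) =
      1 / √2 * √(∑ ω, (√(a ω) - √(b ω)) ^ 2 * c ω) := by
  unfold hellinger
  congr! 3 with ω
  rw [Real.sqrt_mul (ha ω), Real.sqrt_mul (hb ω), ← sub_mul, mul_pow, Real.sq_sqrt (hc ω)]

theorem localization_lemma_general {Ω S : Type*} [Fintype Ω] [Fintype S] [DecidableEq S]
    (f : Ω → S) {P Q c : Ω → ℝ} {a b : S → ℝ}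
    (ha : ∀ s, 0 ≤ a s) (hb : ∀ s, 0 ≤ b s) (hc : ∀ ω, 0 ≤ c ω)
    (hP : ∀ ω, P ω = a (f ω) * c ω) (hQ : ∀ ω, Q ω = b (f ω) * c ω) :
    hellinger (pushforward f P) (pushforward f Q) = hellinger P Q := by
  obtain rfl : P = fun ω => a (f ω) * c ω := funext hP
  obtain rfl : Q = fun ω => b (f ω) * c ω := funext hQ
  calc
    _ = hellinger (fun s => a s * pushforward f c s) (fun s => b s * pushforward f c s) := by
      congr 1 <;> exact funext (pushforward_comp_mul f _ c)
    _ = 1 / √2 * √(∑ s, (√(a s) - √(b s)) ^ 2 * pushforward f c s) :=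
      hellinger_mul_right ha hb (pushforward_nonneg hc f)
    _ = 1 / √2 * √(∑ ω, (√(a (f ω)) - √(b (f ω))) ^ 2 * c ω) := by
      rw [← sum_pushforward f]
      simp only [pushforward_comp_mul f fun s => (√(a s) - √(b s)) ^ 2]
    _ = _ := (hellinger_mul_right (fun ω => ha (f ω)) (fun ω => hb (f ω)) hc).symm

open Classical in
/-- Localization lemma, distributional form.  If two distributions `P, Q` on the
product `T = T₁ × ⋯ × T_k` factorize as `P τ = a (τ i) · c τ` and
`Q τ = b (τ i) · c τ` with a common factor `c`, then the Hellinger distance between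
their marginals on coordinate `i` equals the Hellinger distance between `P` and `Q`. -/
theorem localization_lemma {k : ℕ} (hk : 1 ≤ k)
    (T : Fin k → Type*) [∀ j, Fintype (T j)] (i : Fin k)
    (P Q : (∀ j, T j) → ℝ)
    (hP0 : ∀ τ, 0 ≤ P τ) (hP1 : ∑ τ, P τ = 1)
    (hQ0 : ∀ τ, 0 ≤ Q τ) (hQ1 : ∑ τ, Q τ = 1)
    (a b : T i → ℝ) (c : (∀ j, T j) → ℝ)
    (ha : ∀ t, 0 ≤ a t) (hb : ∀ t, 0 ≤ b t) (hc : ∀ τ, 0 ≤ c τ)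
    (hPfact : ∀ τ, P τ = a (τ i) * c τ)
    (hQfact : ∀ τ, Q τ = b (τ i) * c τ) :
    hellinger (fun t : T i => ∑ τ ∈ Finset.univ.filter (fun τ => τ i = t), P τ)
        (fun t : T i => ∑ τ ∈ Finset.univ.filter (fun τ => τ i = t), Q τ) =
      hellinger P Q :=
  (localization_lemma_general (fun τ : ∀ j, T j => τ i) ha hb hc hPfact hQfact :)
end
end

section
/- Let k ≥ 1 and 0 ≤ ε ≤ 1/2. Let X = (X₁,…,X_k) be uniformly distributed on {0,1}^k, let R = (R₁,…,R_k) be discrete random variables with finite range independent of X, and let Π₁,…,Π_k be discrete random variables with finite range on the same probability space such that for every i ∈ {1,…,k}, H(Π₁ | X_{−i}, R_{−i}, Πᵢ) = 0 (i.e., Π₁ is determined by the inputs and randomness of all players other than i together with Πᵢ). Suppose there is a deterministic function θ with Pr[θ(X₁, R₁, Π₁) = X₁ ⊕ X₂ ⊕ ⋯ ⊕ X_k] ≥ 1 − ε. Then Σ_{i=1}^k [ I(X_{−i}; Πᵢ | Xᵢ, Rᵢ) + I(Xᵢ; Πᵢ | X_{−i}, R_{−i}) ] ≥ (k−1)·(1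 − h_b(ε)), where h_b is the binary entropy function. -/
open Finset

noncomputable section

open Classical in
/-- Probability of an event under a probability mass function on a finite sample space. -/
def pr {Ω : Type*} [Fintype Ω] (p : Ω → ℝ) (E : Ω → Prop) : ℝ :=
  ∑ ω ∈ Finset.univ.filter E, p ω

open Classical in
/-- Shannon entropy (in bits) of a discrete random variable on a finite sample space. -/
def entropy {Ω A : Type*} [Fintype Ω] (p : Ω → ℝ) (X : Ω → A) : ℝ :=
  -∑ a ∈ Finset.univ.image X,
    pr p (fun ω => X ω = a) * Real.logb 2 (pr p (fun ω => X ω = a))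

open Classical in
/-- Conditional entropy `H(X | Y) = ∑_y Pr[Y=y] · H(X | Y=y)` (in bits). -/
def condEntropy {Ω A B : Type*} [Fintype Ω] (p : Ω → ℝ) (X : Ω → A) (Y : Ω → B) : ℝ :=
  ∑ b ∈ Finset.univ.image Y,
    pr p (fun ω => Y ω = b) *
      (-∑ a ∈ Finset.univ.image X,
        (pr p (fun ω => X ω = a ∧ Y ω = b) / pr p (fun ω => Y ω = b)) *
          Real.logb 2
            (pr p (fun ω => X ω = a ∧ Y ω = b) / pr p (fun ω => Y ω = b)))

/-- Conditional mutual information `I(X;Y | Z) = H(X|Z) − H(X|Y,Z)` (in bits). -/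
def condMutualInfo {Ω A B C : Type*} [Fintype Ω] (p : Ω → ℝ)
    (X : Ω → A) (Y : Ω → B) (Z : Ω → C) : ℝ :=
  condEntropy p X Z - condEntropy p X (fun ω => (Y ω, Z ω))

/-- The binary entropy function `h_b(ε) = ε·log₂(1/ε) + (1−ε)·log₂(1/(1−ε))`
(with `h_b(0) = 0`, by the convention `log₂(1/0) = 0`). -/
def binEnt (ε : ℝ) : ℝ :=
  ε * Real.logb 2 (1 / ε) + (1 - ε) * Real.logb 2 (1 / (1 - ε))

/-!
Fix a player `i` other than player 1. Given `X₋ᵢ` and `R₋ᵢ`, the bit `Xᵢ` is uniform. Given in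
addition player `i`'s transcript, player 1's transcript and hence the parity can be recovered, and
the parity together with `X₋ᵢ` yields `Xᵢ` with error at most `ε`; by Fano's inequality the
remaining entropy is at most `h_b(ε)`. Thus `I(Xᵢ; Trᵢ | X₋ᵢ R₋ᵢ) ≥ 1 - h_b(ε)` for each of the
`k - 1` players `i`, and all other terms of the sum are nonnegative.

The same argument bounds the cost of computing `∑ i, X i` in any finite abelian group `G`, for an
arbitrary joint law of inputs and randomness: `1` becomes `H(Xᵢ | X₋ᵢ R₋ᵢ)` and Fano's inequality
costs an additional `ε * log (|G| - 1)`.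
-/

section Probability

variable {Ω A B : Type*} [Fintype Ω] {p : Ω → ℝ}

lemma pr_congr {E F : Ω → Prop} (h : ∀ ω, p ω ≠ 0 → (E ω ↔ F ω)) : pr p E = pr p F := by
  classical
  simp only [pr, sum_filter]
  refine sum_congr rfl fun ω _ => ?_
  by_cases hω : p ω = 0
  · simp [hω]
  · simp [h ω hω]

lemma pr_add_pr_not (p : Ω → ℝ) (E : Ω → Prop) : pr p E + pr p (fun ω => ¬E ω) = ∑ ω, p ω := by
  classical
  rw [← sum_filter_add_sum_filter_not univ E p, pr, pr]
  congr!

lemma pr_nonneg (hp : ∀ ω, 0 ≤ p ω) (E : Ω → Prop) : 0 ≤ pr p E :=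
  sum_nonneg fun ω _ => hp ω

lemma pr_mono (hp : ∀ ω, 0 ≤ p ω) {E F : Ω → Prop} (h : ∀ ω, E ω → F ω) : pr p E ≤ pr p F := by
  classical
  exact sum_le_sum_of_subset_of_nonneg (monotone_filter_right _ fun ω _ => h ω) fun ω _ _ => hp ω

lemma pr_lt_pr (hp : ∀ ω, 0 ≤ p ω) {E F : Ω → Prop} (h : ∀ ω, E ω → F ω) {ω : Ω}
    (hω : p ω ≠ 0) (hF : F ω) (hE : ¬E ω) : pr p E < pr p F := by
  classical
  exact sum_lt_sum_of_subset (monotone_filter_right _ fun ω _ => h ω) (i := ω) (by simpa using hF)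
    (by simpa using hE) ((hp ω).lt_of_ne' hω) fun ω _ _ => hp ω

lemma pr_pos (hp : ∀ ω, 0 ≤ p ω) {E : Ω → Prop} {ω : Ω} (hω : p ω ≠ 0) (hE : E ω) :
    0 < pr p E :=
  (pr_nonneg hp fun _ => False).trans_lt (pr_lt_pr hp (fun _ => False.elim) hω hE id)

lemma sum_pr_fiber_and (p : Ω → ℝ) (X : Ω → A) (E : Ω → Prop) {S : Finset A}
    (hS : ∀ ω, E ω → X ω ∈ S) : ∑ a ∈ S, pr p (fun ω => X ω = a ∧ E ω) = pr p E := by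
  classical
  simp only [pr]
  rw [← sum_fiberwise_of_maps_to (t := S) (g := X) (by simpa using hS)]
  refine sum_congr rfl fun a _ => ?_
  simp only [filter_filter, and_comm]

lemma sum_pr_fiber_mul (p : Ω → ℝ) (X : Ω → A) {S : Finset A} (hS : ∀ ω, X ω ∈ S) (F : A → ℝ) :
    ∑ a ∈ S, pr p (fun ω => X ω = a) * F a = ∑ ω, p ω * F (X ω) := by
  classical
  rw [← sum_fiberwise_of_maps_to (t := S) (g := X) (by simpa using hS)]
  refine sum_congr rfl fun a _ => ?_
  rw [pr, sum_mul]
  exact sum_congr (by congr) fun ω hω => by rw [(mem_filter.1 hω).2]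

lemma sum_pr_fiber_and_fiber_mul (p : Ω → ℝ) (X : Ω → A) (Y : Ω → B) {S : Finset A} {T : Finset B}
    (hS : ∀ ω, X ω ∈ S) (hT : ∀ ω, Y ω ∈ T) (F : A → B → ℝ) :
    ∑ b ∈ T, ∑ a ∈ S, pr p (fun ω => X ω = a ∧ Y ω = b) * F a b =
      ∑ ω, p ω * F (X ω) (Y ω) := by
  rw [← sum_pr_fiber_mul p (fun ω => (X ω, Y ω)) (S := S ×ˢ T)
    (fun ω => mem_product.2 ⟨hS ω, hT ω⟩) (fun x => F x.1 x.2), sum_product_right]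
  simp only [Prod.mk.injEq]

lemma pr_fiber_and_comp_of_indep {D : Type*} {X : Ω → A} {Y : Ω → B}
    (hindep : ∀ a b, pr p (fun ω => X ω = a ∧ Y ω = b) =
      pr p (fun ω => X ω = a) * pr p (fun ω => Y ω = b)) (F : B → D) (a : A) (d : D) :
    pr p (fun ω => X ω = a ∧ F (Y ω) = d) =
      pr p (fun ω => X ω = a) * pr p (fun ω => F (Y ω) = d) := by
  classical
  let S : Finset B := {b ∈ univ.image Y | F b = d}
  rw [← sum_pr_fiber_and p Y (fun ω => X ω = a ∧ F (Y ω) = d) (S := S) (by simp [S]),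
    ← sum_pr_fiber_and p Y (fun ω => F (Y ω) = d) (S := S) (by simp [S]), mul_sum]
  refine sum_congr rfl fun b hb => ?_
  obtain rfl : F b = d := (mem_filter.1 hb).2
  calc pr p (fun ω => Y ω = b ∧ X ω = a ∧ F (Y ω) = F b)
      = pr p (fun ω => X ω = a ∧ Y ω = b) := pr_congr fun ω _ => by grind
    _ = pr p (fun ω => X ω = a) * pr p (fun ω => Y ω = b) := hindep a b
    _ = pr p (fun ω => X ω = a) * pr p (fun ω => Y ω = b ∧ F (Y ω) = F b) := by
      congr 1
      exact pr_congr fun ω _ => by grind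

end Probability

section ConditionalEntropy

variable {Ω A B C : Type*} [Fintype Ω] {p : Ω → ℝ}

/-- Conditional probability `Pr[X = a | Y = b]`, equal to `0` when `Pr[Y = b] = 0`. -/
def condPr (p : Ω → ℝ) (X : Ω → A) (Y : Ω → B) (a : A) (b : B) : ℝ :=
  pr p (fun ω => X ω = a ∧ Y ω = b) / pr p (fun ω => Y ω = b)

lemma condPr_nonneg (hp : ∀ ω, 0 ≤ p ω) (X : Ω → A) (Y : Ω → B) (a : A) (b : B) :
    0 ≤ condPr p X Y a b :=
  div_nonneg (pr_nonneg hp _) (pr_nonneg hp _)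

lemma condPr_le_one (hp : ∀ ω, 0 ≤ p ω) (X : Ω → A) (Y : Ω → B) (a : A) (b : B) :
    condPr p X Y a b ≤ 1 :=
  div_le_one_of_le₀ (pr_mono hp fun _ h => h.2) (pr_nonneg hp _)

lemma condPr_pos (hp : ∀ ω, 0 ≤ p ω) (X : Ω → A) (Y : Ω → B) {ω : Ω} (hω : p ω ≠ 0) :
    0 < condPr p X Y (X ω) (Y ω) :=
  div_pos (pr_pos hp hω ⟨rfl, rfl⟩) (pr_pos hp hω rfl)

lemma sum_condPr_le_one (p : Ω → ℝ) (X : Ω → A) (Y : Ω → B) {S : Finset A}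
    (hS : ∀ ω, X ω ∈ S) (b : B) : ∑ a ∈ S, condPr p X Y a b ≤ 1 := by
  simp only [condPr]
  rw [← sum_div, sum_pr_fiber_and p X _ fun ω _ => hS ω]
  exact div_self_le_one _

lemma eq_of_condPr_eq_one (hp : ∀ ω, 0 ≤ p ω) {X : Ω → A} {Y : Ω → B} {a : A} {b : B}
    (h : condPr p X Y a b = 1) {ω : Ω} (hω : p ω ≠ 0) (hY : Y ω = b) : X ω = a := by
  by_contra hX
  have hlt : pr p (fun ω => X ω = a ∧ Y ω = b) < pr p (fun ω => Y ω = b) :=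
    pr_lt_pr hp (fun _ h => h.2) hω hY fun h => hX h.1
  exact hlt.ne (eq_of_div_eq_one h)

lemma condEntropy_eq_sum (hp : ∀ ω, 0 ≤ p ω) (X : Ω → A) (Y : Ω → B) :
    condEntropy p X Y = ∑ ω, p ω * -Real.logb 2 (condPr p X Y (X ω) (Y ω)) := by
  classical
  rw [← sum_pr_fiber_and_fiber_mul p X Y (S := univ.image X) (T := univ.image Y) (by simp) (by simp)
    (fun a b => -Real.logb 2 (condPr p X Y a b)), condEntropy]
  refine sum_congr (by congr) fun b _ => ?_
  rw [← sum_neg_distrib, mul_sum]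
  refine sum_congr (by congr) fun a _ => ?_
  rw [condPr, ← mul_neg, ← mul_assoc, mul_div_cancel_of_imp']
  exact fun hb => le_antisymm (hb ▸ pr_mono hp fun _ h => h.2) (pr_nonneg hp _)

lemma sum_mul_div_condPr_le (hp : ∀ ω, 0 ≤ p ω) {X : Ω → A} {Y : Ω → B} {S : Finset A}
    (hS : ∀ ω, X ω ∈ S) {q : A → B → ℝ} (hq0 : ∀ a b, 0 ≤ q a b)
    (hq1 : ∀ b, ∑ a ∈ S, q a b ≤ 1) :
    ∑ ω, p ω * (q (X ω) (Y ω) / condPr p X Y (X ω) (Y ω)) ≤ ∑ ω, p ω := by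
  classical
  have hT : ∀ ω, Y ω ∈ univ.image Y := by simp
  have hterm (a : A) (b : B) :
      pr p (fun ω => X ω = a ∧ Y ω = b) * (q a b / condPr p X Y a b) ≤
        pr p (fun ω => Y ω = b) * q a b := by
    rcases (pr_nonneg hp fun ω => X ω = a ∧ Y ω = b).eq_or_lt with h | h
    · rw [← h, zero_mul]
      exact mul_nonneg (pr_nonneg hp _) (hq0 a b)
    · refine le_of_eq ?_
      rw [condPr]
      field_simp
  calc ∑ ω, p ω * (q (X ω) (Y ω) / condPr p X Y (X ω) (Y ω))
      = ∑ b ∈ univ.image Y, ∑ a ∈ S,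
          pr p (fun ω => X ω = a ∧ Y ω = b) * (q a b / condPr p X Y a b) :=
        (sum_pr_fiber_and_fiber_mul p X Y hS hT fun a b => q a b / condPr p X Y a b).symm
    _ ≤ ∑ b ∈ univ.image Y, pr p (fun ω => Y ω = b) * ∑ a ∈ S, q a b := by
        simp only [mul_sum]
        exact sum_le_sum fun b _ => sum_le_sum fun a _ => hterm a b
    _ ≤ ∑ b ∈ univ.image Y, pr p (fun ω => Y ω = b) * 1 :=
        sum_le_sum fun b _ => mul_le_mul_of_nonneg_left (hq1 b) (pr_nonneg hp _)
    _ = ∑ ω, p ω := by simpa using sum_pr_fiber_mul p Y hT fun _ => 1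

lemma neg_logb_two_sub_neg_logb_two_le {x y : ℝ} (hx : 0 < x) (hy : 0 < y) :
    -Real.logb 2 x - -Real.logb 2 y ≤ (y / x - 1) / Real.log 2 := by
  have hlog : Real.log y - Real.log x ≤ y / x - 1 := by
    rw [← Real.log_div hy.ne' hx.ne']
    exact Real.log_le_sub_one_of_pos (div_pos hy hx)
  calc -Real.logb 2 x - -Real.logb 2 y = (Real.log y - Real.log x) / Real.log 2 := by
        rw [Real.logb, Real.logb]
        ring
    _ ≤ (y / x - 1) / Real.log 2 := by gcongr

lemma condEntropy_le_crossEntropy (hp : ∀ ω, 0 ≤ p ω) {X : Ω → A} {Y : Ω → B} {S : Finset A}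
    (hS : ∀ ω, X ω ∈ S) {q : A → B → ℝ} (hq0 : ∀ a b, 0 ≤ q a b)
    (hq1 : ∀ b, ∑ a ∈ S, q a b ≤ 1) (hqpos : ∀ ω, p ω ≠ 0 → 0 < q (X ω) (Y ω)) :
    condEntropy p X Y ≤ ∑ ω, p ω * -Real.logb 2 (q (X ω) (Y ω)) := by
  have hterm (ω : Ω) : p ω * -Real.logb 2 (condPr p X Y (X ω) (Y ω)) -
      p ω * -Real.logb 2 (q (X ω) (Y ω)) ≤
        (p ω * (q (X ω) (Y ω) / condPr p X Y (X ω) (Y ω)) - p ω) / Real.log 2 := by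
    by_cases hω : p ω = 0
    · simp [hω]
    · calc _ = p ω * (-Real.logb 2 (condPr p X Y (X ω) (Y ω)) -
            -Real.logb 2 (q (X ω) (Y ω))) := by ring
        _ ≤ p ω * ((q (X ω) (Y ω) / condPr p X Y (X ω) (Y ω) - 1) / Real.log 2) :=
          mul_le_mul_of_nonneg_left
            (neg_logb_two_sub_neg_logb_two_le (condPr_pos hp X Y hω) (hqpos ω hω)) (hp ω)
        _ = _ := by ring
  rw [condEntropy_eq_sum hp, ← sub_nonpos, ← sum_sub_distrib]
  refine (sum_le_sum fun ω _ => hterm ω).trans ?_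
  rw [← sum_div, sum_sub_distrib]
  exact div_nonpos_of_nonpos_of_nonneg (sub_nonpos.2 (sum_mul_div_condPr_le hp hS hq0 hq1))
    (Real.log_nonneg one_le_two)

lemma condMutualInfo_nonneg (hp : ∀ ω, 0 ≤ p ω) (X : Ω → A) (Y : Ω → B) (Z : Ω → C) :
    0 ≤ condMutualInfo p X Y Z := by
  classical
  have hX : ∀ ω, X ω ∈ univ.image X := by simp
  rw [condMutualInfo, sub_nonneg, condEntropy_eq_sum hp X Z]
  exact condEntropy_le_crossEntropy hp (Y := fun ω => (Y ω, Z ω))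
    (q := fun a b => condPr p X Z a b.2) hX (fun a b => condPr_nonneg hp X Z a b.2)
    (fun b => sum_condPr_le_one p X Z hX b.2) fun ω hω => condPr_pos hp X Z hω

lemma condPr_eq_one_of_condEntropy_eq_zero (hp : ∀ ω, 0 ≤ p ω) {X : Ω → A} {Y : Ω → B}
    (h : condEntropy p X Y = 0) {ω : Ω} (hω : p ω ≠ 0) : condPr p X Y (X ω) (Y ω) = 1 := by
  have hterm_nonneg (ω : Ω) : 0 ≤ p ω * -Real.logb 2 (condPr p X Y (X ω) (Y ω)) :=
    mul_nonneg (hp ω) <| neg_nonneg.2 <|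
      Real.logb_nonpos one_lt_two (condPr_nonneg hp X Y _ _) (condPr_le_one hp X Y _ _)
  rw [condEntropy_eq_sum hp, sum_eq_zero_iff_of_nonneg fun ω _ => hterm_nonneg ω] at h
  have hlog : Real.logb 2 (condPr p X Y (X ω) (Y ω)) = 0 := by simpa [hω] using h ω (mem_univ ω)
  exact Real.eq_one_of_pos_of_logb_eq_zero one_lt_two (condPr_pos hp X Y hω) hlog

lemma exists_eq_comp_of_condEntropy_eq_zero [Nonempty A] (hp : ∀ ω, 0 ≤ p ω) {X : Ω → A}
    {Y : Ω → B} (h : condEntropy p X Y = 0) : ∃ g : B → A, ∀ ω, p ω ≠ 0 → X ω = g (Y ω) := by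
  have hfiber (b : B) : ∃ a, ∀ ω, p ω ≠ 0 → Y ω = b → X ω = a := by
    by_cases hb : ∃ ω, p ω ≠ 0 ∧ Y ω = b
    · obtain ⟨ω₀, hω₀, rfl⟩ := hb
      exact ⟨X ω₀, fun ω => eq_of_condPr_eq_one hp (condPr_eq_one_of_condEntropy_eq_zero hp h hω₀)⟩
    · exact ⟨Classical.arbitrary A, fun ω hω hY => (hb ⟨ω, hω, hY⟩).elim⟩
  choose g hg using hfiber
  exact ⟨g, fun ω hω => hg (Y ω) ω hω rfl⟩

lemma condEntropy_eq_logb_card [Fintype A] (hp : ∀ ω, 0 ≤ p ω) (hsum : ∑ ω, p ω = 1)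
    {X : Ω → A} {Y : Ω → B}
    (hunif : ∀ a a' b, pr p (fun ω => X ω = a ∧ Y ω = b) = pr p (fun ω => X ω = a' ∧ Y ω = b)) :
    condEntropy p X Y = Real.logb 2 (Fintype.card A) := by
  have hcondPr (ω : Ω) (hω : p ω ≠ 0) :
      condPr p X Y (X ω) (Y ω) = (Fintype.card A : ℝ)⁻¹ := by
    have hpos : 0 < pr p (fun ω' => X ω' = X ω ∧ Y ω' = Y ω) := pr_pos hp hω ⟨rfl, rfl⟩
    have hmarginal : pr p (fun ω' => Y ω' = Y ω) =
        Fintype.card A * pr p (fun ω' => X ω' = X ω ∧ Y ω' = Y ω) := by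
      rw [← sum_pr_fiber_and p X _ fun ω _ => mem_univ (X ω), sum_congr rfl fun a _ =>
        hunif a (X ω) (Y ω), sum_const, nsmul_eq_mul, card_univ]
    rw [condPr, hmarginal, div_mul_cancel_right₀ hpos.ne']
  calc condEntropy p X Y = ∑ ω, p ω * Real.logb 2 (Fintype.card A) := by
        rw [condEntropy_eq_sum hp]
        refine sum_congr rfl fun ω _ => ?_
        by_cases hω : p ω = 0
        · simp [hω]
        · rw [hcondPr ω hω, Real.logb_inv, neg_neg]
    _ = Real.logb 2 (Fintype.card A) := by rw [← sum_mul, hsum, one_mul]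

end ConditionalEntropy

section Fano

variable {Ω A B : Type*} [Fintype Ω] {p : Ω → ℝ}

lemma sum_mul_ite_eq_pr_mul_add (p : Ω → ℝ) (E : Ω → Prop) [DecidablePred E] (u v : ℝ) :
    ∑ ω, p ω * (if E ω then u else v) = pr p E * u + pr p (fun ω => ¬E ω) * v := by
  classical
  simp only [mul_ite, sum_ite, pr, sum_mul]
  congr!

lemma sum_ite_eq_add_card_sub_one_mul [Fintype A] [DecidableEq A] (c : A) (u v : ℝ) :
    ∑ a, (if c = a then u else v) = u + (Fintype.card A - 1) * v := by
  rw [← add_sum_erase _ _ (mem_univ c), if_pos rfl,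
    sum_congr rfl fun a ha => if_neg (ne_of_mem_erase ha).symm, sum_const, nsmul_eq_mul,
    cast_card_erase_of_mem (mem_univ c), card_univ]

-- Compare with the conditional law that gives the guess `g b` weight `u` and every other value
-- weight `v`.
lemma condEntropy_le_of_guess [Fintype A] (hp : ∀ ω, 0 ≤ p ω) {X : Ω → A} {Y : Ω → B} (g : B → A)
    {u v : ℝ} (hu : 0 < u) (hv : 0 ≤ v) (huv : u + (Fintype.card A - 1) * v ≤ 1)
    (hvpos : ∀ ω, p ω ≠ 0 → g (Y ω) ≠ X ω → 0 < v) :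
    condEntropy p X Y ≤ pr p (fun ω => g (Y ω) = X ω) * -Real.logb 2 u +
      pr p (fun ω => g (Y ω) ≠ X ω) * -Real.logb 2 v := by
  classical
  let q (a : A) (b : B) : ℝ := if g b = a then u else v
  have hq0 (a : A) (b : B) : 0 ≤ q a b := ite_nonneg hu.le hv
  have hq1 (b : B) : ∑ a, q a b ≤ 1 := (sum_ite_eq_add_card_sub_one_mul (g b) u v).trans_le huv
  have hqpos (ω : Ω) (hω : p ω ≠ 0) : 0 < q (X ω) (Y ω) := by
    dsimp only [q]
    split_ifs with h
    · exact hu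
    · exact hvpos ω hω h
  refine (condEntropy_le_crossEntropy hp (fun ω => mem_univ (X ω)) hq0 hq1 hqpos).trans_eq ?_
  simp only [q, apply_ite (Real.logb 2), apply_ite (fun x : ℝ => -x)]
  exact sum_mul_ite_eq_pr_mul_add p (fun ω => g (Y ω) = X ω) _ _

-- The guess costs `-log (1 - ε)` when it is right and `-log (ε / (n - 1))` when it is wrong; being
-- wrong costs more, so the average is largest at error probability exactly `ε`.
lemma one_sub_mul_add_mul_le_binEnt_add {n q ε : ℝ} (hq : 0 ≤ q) (hqε : q ≤ ε) (hn : 0 < n)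
    (hε : ε ≤ 1 - 1 / n) :
    (1 - q) * -Real.logb 2 (1 - ε) + q * -Real.logb 2 (ε / (n - 1)) ≤
      binEnt ε + ε * Real.logb 2 (n - 1) := by
  rcases (hq.trans hqε).eq_or_lt with rfl | hε0
  · simp [binEnt, le_antisymm hqε hq]
  have hεn : ε * n ≤ n - 1 := by
    have := mul_le_mul_of_nonneg_right hε hn.le
    rwa [sub_mul, one_div_mul_cancel hn.ne', one_mul] at this
  have hn1 : 0 < n - 1 := (mul_pos hε0 hn).trans_le hεn
  have hcost : Real.logb 2 (ε / (n - 1)) ≤ Real.logb 2 (1 - ε) :=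
    Real.logb_le_logb_of_le one_lt_two (div_pos hε0 hn1) (by rw [div_le_iff₀ hn1]; linarith)
  calc (1 - q) * -Real.logb 2 (1 - ε) + q * -Real.logb 2 (ε / (n - 1))
      ≤ (1 - ε) * -Real.logb 2 (1 - ε) + ε * -Real.logb 2 (ε / (n - 1)) := by
        linear_combination (ε - q) * hcost
    _ = binEnt ε + ε * Real.logb 2 (n - 1) := by
        rw [binEnt, one_div, one_div, Real.logb_inv, Real.logb_inv,
          Real.logb_div hε0.ne' hn1.ne']
        ring

theorem fano_inequality [Fintype A] (hp : ∀ ω, 0 ≤ p ω) (hsum : ∑ ω, p ω = 1) {ε : ℝ}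
    (hε : ε ≤ 1 - 1 / Fintype.card A) {X : Ω → A} {Y : Ω → B} {g : B → A}
    (hg : 1 - ε ≤ pr p (fun ω => g (Y ω) = X ω)) :
    condEntropy p X Y ≤ binEnt ε + ε * Real.logb 2 (Fintype.card A - 1) := by
  set err := pr p (fun ω => g (Y ω) ≠ X ω) with herr
  have hright : pr p (fun ω => g (Y ω) = X ω) = 1 - err := by
    rw [← hsum, ← pr_add_pr_not p fun ω => g (Y ω) = X ω, add_sub_cancel_right]
  have herrε : err ≤ ε := by linarith
  have hε0 : 0 ≤ ε := (pr_nonneg hp _).trans herrε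
  have hΩ : Nonempty Ω := not_isEmpty_iff.1 fun _ => by simp at hsum
  have : Nonempty A := hΩ.map X
  have hcard : (1 : ℝ) ≤ Fintype.card A := by exact_mod_cast Fintype.card_pos
  have hε1 : 0 < 1 - ε := by
    have : 0 < 1 / (Fintype.card A : ℝ) := by positivity
    linarith
  have hweight : (1 - ε) + (Fintype.card A - 1) * (ε / (Fintype.card A - 1)) ≤ 1 := by
    rw [mul_div_left_comm]
    linarith [mul_le_of_le_one_right hε0 (div_self_le_one ((Fintype.card A : ℝ) - 1))]
  have hwrong (ω : Ω) (hω : p ω ≠ 0) (h : g (Y ω) ≠ X ω) : 0 < ε / (Fintype.card A - 1) := by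
    have : 1 < Fintype.card A := Fintype.one_lt_card_iff.2 ⟨_, _, h⟩
    exact div_pos ((pr_pos hp hω h).trans_le herrε) (sub_pos.2 (by exact_mod_cast this))
  refine (condEntropy_le_of_guess hp g hε1 (div_nonneg hε0 (sub_nonneg.2 hcard)) hweight
    hwrong).trans ?_
  rw [hright, ← herr]
  exact one_sub_mul_add_mul_le_binEnt_add (pr_nonneg hp _) herrε (one_pos.trans_le hcard) hε

end Fano

section MultiParty

variable {Ω ι G : Type*} [Fintype Ω] {α ρ τ : ι → Type*} {p : Ω → ℝ}

/-- The tuple `x₋ᵢ` of all coordinates of `x` except the `i`-th. -/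
abbrev others (i : ι) (x : ∀ j, α j) : ∀ j : {j // j ≠ i}, α j :=
  fun j => x j

/-- The multi-party information cost
`∑ᵢ (I(X₋ᵢ; Trᵢ | Xᵢ Rᵢ) + I(Xᵢ; Trᵢ | X₋ᵢ R₋ᵢ))` of a protocol, which enters only through the
joint law of the players' inputs `X`, private randomness `R` and transcripts `Tr`. -/
def multiPartyInfoCost [Fintype ι] (p : Ω → ℝ) (X : Ω → ∀ i, α i) (R : Ω → ∀ i, ρ i)
    (Tr : Ω → ∀ i, τ i) : ℝ :=
  ∑ i, (condMutualInfo p (fun ω => others i (X ω)) (fun ω => Tr ω i) (fun ω => (X ω i, R ω i)) +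
    condMutualInfo p (fun ω => X ω i) (fun ω => Tr ω i)
      (fun ω => (others i (X ω), others i (R ω))))

lemma sum_condMutualInfo_le_multiPartyInfoCost [Fintype ι] (hp : ∀ ω, 0 ≤ p ω) (S : Finset ι)
    (X : Ω → ∀ i, α i) (R : Ω → ∀ i, ρ i) (Tr : Ω → ∀ i, τ i) :
    ∑ i ∈ S, condMutualInfo p (fun ω => X ω i) (fun ω => Tr ω i)
      (fun ω => (others i (X ω), others i (R ω))) ≤ multiPartyInfoCost p X R Tr :=
  (sum_le_univ_sum_of_nonneg fun _ => condMutualInfo_nonneg hp _ _ _).trans <|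
    sum_le_sum fun _ _ => le_add_of_nonneg_left (condMutualInfo_nonneg hp _ _ _)

lemma condEntropy_coord_eq_logb_card [Fintype G] (hp : ∀ ω, 0 ≤ p ω) (hsum : ∑ ω, p ω = 1)
    {X : Ω → ι → G} {R : Ω → ∀ i, ρ i}
    (hunif : ∀ v w, pr p (fun ω => X ω = v) = pr p (fun ω => X ω = w))
    (hindep : ∀ v r, pr p (fun ω => X ω = v ∧ R ω = r) =
      pr p (fun ω => X ω = v) * pr p (fun ω => R ω = r)) (i : ι) :
    condEntropy p (fun ω => X ω i) (fun ω => (others i (X ω), others i (R ω))) =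
      Real.logb 2 (Fintype.card G) := by
  classical
  have hjoint (a : G) (b : ({j // j ≠ i} → G) × ∀ j : {j // j ≠ i}, ρ j) :
      pr p (fun ω => X ω i = a ∧ (others i (X ω), others i (R ω)) = b) =
        pr p (fun ω => X ω = (Equiv.funSplitAt i G).symm (a, b.1)) *
          pr p (fun ω => others i (R ω) = b.2) := by
    rw [← pr_fiber_and_comp_of_indep hindep]
    refine pr_congr fun ω _ => ?_
    rw [Equiv.eq_symm_apply, Prod.ext_iff, Prod.ext_iff, ← and_assoc]
    rfl
  refine condEntropy_eq_logb_card hp hsum fun a a' b => ?_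
  rw [hjoint a, hjoint a', hunif]

variable [Fintype ι] [AddCommGroup G] [Fintype G]

-- Player `i₀`'s transcript, hence the sum of all inputs, can be recovered from player `i`'s
-- transcript and the other players' data; subtracting the other inputs leaves a guess for `X i`.
lemma condEntropy_coord_le_of_computes_sum (hp : ∀ ω, 0 ≤ p ω) (hsum : ∑ ω, p ω = 1)
    {ε : ℝ} (hε : ε ≤ 1 - 1 / Fintype.card G) {X : Ω → ι → G} {R : Ω → ∀ i, ρ i}
    {Tr : Ω → ∀ i, τ i} {i₀ i : ι} (hi : i₀ ≠ i)
    (hdet : condEntropy p (fun ω => Tr ω i₀)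
      (fun ω => (others i (X ω), others i (R ω), Tr ω i)) = 0)
    {θ : G → ρ i₀ → τ i₀ → G}
    (hcorrect : 1 - ε ≤ pr p (fun ω => θ (X ω i₀) (R ω i₀) (Tr ω i₀) = ∑ j, X ω j)) :
    condEntropy p (fun ω => X ω i) (fun ω => (Tr ω i, others i (X ω), others i (R ω))) ≤
      binEnt ε + ε * Real.logb 2 (Fintype.card G - 1) := by
  classical
  have hΩ : Nonempty Ω := not_isEmpty_iff.1 fun _ => by simp at hsum
  have : Nonempty (τ i₀) := hΩ.map fun ω => Tr ω i₀
  obtain ⟨transcript, htranscript⟩ := exists_eq_comp_of_condEntropy_eq_zero hp hdet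
  let guess : τ i × ({j // j ≠ i} → G) × (∀ j : {j // j ≠ i}, ρ j) → G := fun ⟨t, x, r⟩ =>
    θ (x ⟨i₀, hi⟩) (r ⟨i₀, hi⟩) (transcript (x, r, t)) - ∑ j, x j
  refine fano_inequality hp hsum hε (g := guess) (hcorrect.trans_eq (pr_congr fun ω hω => ?_))
  rw [htranscript ω hω, Fintype.sum_eq_add_sum_subtype_ne _ i, ← sub_eq_iff_eq_add]

theorem mic_parity_lower_bound_general [DecidableEq ι] (hp : ∀ ω, 0 ≤ p ω)
    (hsum : ∑ ω, p ω = 1) {ε : ℝ} (hε : ε ≤ 1 - 1 / Fintype.card G)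
    (X : Ω → ι → G) (R : Ω → ∀ i, ρ i) (Tr : Ω → ∀ i, τ i) (i₀ : ι)
    (hdet : ∀ i, i₀ ≠ i → condEntropy p (fun ω => Tr ω i₀)
      (fun ω => (others i (X ω), others i (R ω), Tr ω i)) = 0)
    (θ : G → ρ i₀ → τ i₀ → G)
    (hcorrect : 1 - ε ≤ pr p (fun ω => θ (X ω i₀) (R ω i₀) (Tr ω i₀) = ∑ j, X ω j)) :
    ∑ i ∈ univ.erase i₀,
        (condEntropy p (fun ω => X ω i) (fun ω => (others i (X ω), others i (R ω))) -
          (binEnt ε + ε * Real.logb 2 (Fintype.card G - 1))) ≤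
      multiPartyInfoCost p X R Tr := by
  refine le_trans (sum_le_sum fun i hi => ?_)
    (sum_condMutualInfo_le_multiPartyInfoCost hp (univ.erase i₀) X R Tr)
  have hi₀ : i₀ ≠ i := (ne_of_mem_erase hi).symm
  exact sub_le_sub_left
    (condEntropy_coord_le_of_computes_sum hp hsum hε hi₀ (hdet i hi₀) hcorrect) _

end MultiParty

/-- Multi-party information cost lower bound for parity.  Let `X` be uniform on
`{0,1}^k`, `R` (the players' private randomness) independent of `X`, and `Tr i`
(player `i`'s transcript) such that player 1's transcript is determined by the
inputs and randomness of all players other than `i` together with `Tr i`.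
If a deterministic function of `(X₁, R₁, Tr₁)` equals `X₁ ⊕ ⋯ ⊕ X_k` with
probability at least `1 − ε`, then
`∑ᵢ (I(X₋ᵢ; Trᵢ | Xᵢ Rᵢ) + I(Xᵢ; Trᵢ | X₋ᵢ R₋ᵢ)) ≥ (k−1)(1 − h_b(ε))`. -/
theorem mic_parity_lower_bound {Ω : Type*} [Fintype Ω]
    {k : ℕ} (hk : 0 < k)
    (ε : ℝ) (hε0 : 0 ≤ ε) (hε1 : ε ≤ 1 / 2)
    (p : Ω → ℝ) (hp : ∀ ω, 0 ≤ p ω) (hsum : ∑ ω, p ω = 1)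
    (ρ τ : Fin k → Type*)
    (X : Ω → Fin k → ZMod 2) (R : Ω → ∀ i, ρ i) (Tr : Ω → ∀ i, τ i)
    (huniform : ∀ v : Fin k → ZMod 2,
      pr p (fun ω => X ω = v) = (1 / 2 : ℝ) ^ k)
    (hindep : ∀ (v : Fin k → ZMod 2) (r : ∀ i, ρ i),
      pr p (fun ω => X ω = v ∧ R ω = r) =
        pr p (fun ω => X ω = v) * pr p (fun ω => R ω = r))
    (hdet : ∀ i : Fin k,
      condEntropy p (fun ω => Tr ω ⟨0, hk⟩)
        (fun ω => ((fun j : {j : Fin k // j ≠ i} => X ω j.1),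
                   (fun j : {j : Fin k // j ≠ i} => R ω j.1),
                   Tr ω i)) = 0)
    (θ : ZMod 2 → ρ ⟨0, hk⟩ → τ ⟨0, hk⟩ → ZMod 2)
    (hcorrect : 1 - ε ≤ pr p (fun ω =>
      θ (X ω ⟨0, hk⟩) (R ω ⟨0, hk⟩) (Tr ω ⟨0, hk⟩) = ∑ j, X ω j)) :
    ((k : ℝ) - 1) * (1 - binEnt ε) ≤
      ∑ i : Fin k,
        (condMutualInfo p (fun ω => fun j : {j : Fin k // j ≠ i} => X ω j.1)
            (fun ω => Tr ω i) (fun ω => (X ω i, R ω i)) +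
          condMutualInfo p (fun ω => X ω i) (fun ω => Tr ω i)
            (fun ω => ((fun j : {j : Fin k // j ≠ i} => X ω j.1),
                       (fun j : {j : Fin k // j ≠ i} => R ω j.1)))) := by
  have hentropy (i : Fin k) := condEntropy_coord_eq_logb_card hp hsum
    (fun v w => (huniform v).trans (huniform w).symm) hindep i
  refine Eq.trans_le ?_ (mic_parity_lower_bound_general hp hsum
    (hε1.trans_eq (by norm_num [ZMod.card])) X R Tr ⟨0, hk⟩ (fun i _ => hdet i) θ hcorrect)
  norm_num [hentropy, ZMod.card, Nat.cast_pred hk, mul_sub]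
end
end
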